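/- arXiv:2601.04241 — 5 statements merged into one kernel-verified Lean document; each statement's English description precedes it below -/
import Mathlib

section
/- For all coprime positive integers p and q with p ≠ q, the second cuboid polynomial Q_{p,q}(t) has no rational root: there is no t ∈ ℚ with Q_{p,q}(t) = 0. -/
/-!
The cuboid polynomial satisfies the identity
`Q(t) = (t² - p²q²)(t² + p⁴)²(t² + q⁴)² - 4t²(t² + p²q²)³(p⁴ - q⁴)`.
Put `k = (p² - q²)t / (t² + p²q²)`. Since
`(t² + p⁴)(t² + q⁴) = (t² + p²q²)² + t²(p² - q²)²`, a root `t` of `Q` satisfies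
`(1 + k²)²(t² - p²q²) = 4kt(p² + q²)`, and eliminating `p² ± q²` gives
`(8tpqk)²(1 + k²) = (t² - p²q²)²(1 - k²)²(k⁴ + 6k² + 1)`.
So `k` is the abscissa of a rational point on the genus two curve
`y² = (k² + 1)(k⁴ + 6k² + 1)`.

Let `k = u/v` in lowest terms. If `uv` is even, the two factors are coprime, so
`u⁴ + 6u²v² + v⁴ = d²`, which gives `d⁴ = (u² - v²)⁴ + (4uv(u² + v²))²`; Fermat's descent for
`x⁴ - y⁴ = z²` forces `uv = 0`. If `u, v` are odd, with `u + v = 2m` and `u - v = 2n`, the equation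
becomes `(m² + n²)(m⁴ + n⁴) = □` with coprime factors, so `m⁴ + n⁴` is a square and `mn = 0`.
Hence `k = 0`, which means `p = q`, or `k = ±1`, which the displayed relation rules out.
-/

/-- Sharipov's second cuboid polynomial `Q_{p,q}(t)`, evaluated at a rational `t`,
with parameters `p, q` cast into `ℚ`. -/
def cuboidPoly (p q t : ℚ) : ℚ :=
  t^10 + (2*q^2 + p^2) * (3*q^2 - 2*p^2) * t^8
    + (q^8 + 10*p^2*q^6 + 4*p^4*q^4 - 14*p^6*q^2 + p^8) * t^6
    - p^2*q^2 * (q^8 - 14*p^2*q^6 + 4*p^4*q^4 + 10*p^6*q^2 + p^8) * t^4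
    - p^6*q^6 * (q^2 + 2*p^2) * (-2*q^2 + 3*p^2) * t^2
    - p^10*q^10

/-- In an integral square written as a product of coprime factors, a nonnegative factor is a
square. -/
lemma sq_of_coprime_mul {a b c : ℤ} (h : IsCoprime a b) (heq : a * b = c ^ 2) (ha : 0 ≤ a) :
    ∃ d, a = d ^ 2 := by
  obtain ⟨d, hd | hd⟩ := Int.sq_of_gcd_eq_one (Int.isCoprime_iff_gcd_eq_one.mp h) heq
  · exact ⟨d, hd⟩
  · exact ⟨0, by nlinarith [sq_nonneg d]⟩

/-- If the smaller solution of `e⁴ - f⁴ = b²` is known to be trivial, then `x² = 4a⁴ + b⁴` with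
`b` odd has only the trivial solution `a = 0`. -/
lemma four_descent_step {x a b : ℤ} (hb : b % 2 = 1) (hc : IsCoprime a b)
    (h : x ^ 2 = 4 * a ^ 4 + b ^ 4)
    (ih : ∀ e f g : ℤ, e.natAbs < x.natAbs → IsCoprime e f → e ^ 4 = f ^ 4 + g ^ 2 →
      f = 0 ∨ g = 0) : a = 0 := by
  by_contra ha
  have hb0 : b ≠ 0 := by rintro rfl; simp at hb
  have hx0 : x ≠ 0 := by
    rintro rfl
    have : 0 < b ^ 4 := by positivity
    have : 0 < a ^ 4 := by positivity
    linarith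
  have hbo : b ^ 2 % 2 = 1 := by simp [pow_two, Int.mul_emod, hb]
  have hpt : PythagoreanTriple (b ^ 2) (2 * a ^ 2) |x| := by
    unfold PythagoreanTriple
    rw [abs_mul_abs_self]; linear_combination -h
  have hco : IsCoprime (b ^ 2) (2 * a ^ 2) := by
    apply IsCoprime.mul_right
    · exact ⟨1, -(b ^ 2 / 2), by omega⟩
    · exact hc.symm.pow
  obtain ⟨U, V, h1, h2, h3, h4, -, hU⟩ := hpt.coprime_classification'
    (Int.isCoprime_iff_gcd_eq_one.mp hco) hbo (abs_pos.mpr hx0)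
  have hUV : IsCoprime U V := Int.isCoprime_iff_gcd_eq_one.mpr h4
  have h5 : U * V = a ^ 2 := by linarith
  have hpos : 0 < U * V := by rw [h5]; positivity
  have hU' : 0 < U := lt_of_le_of_ne hU (by rintro rfl; simp at hpos)
  have hV' : 0 < V := by exact (mul_pos_iff_of_pos_left hU').mp hpos
  obtain ⟨e, rfl⟩ := sq_of_coprime_mul hUV h5 hU
  obtain ⟨f, rfl⟩ := sq_of_coprime_mul hUV.symm (by rw [mul_comm]; exact h5) hV'.le
  have hf : f ≠ 0 := by rintro rfl; simp at hV'
  have hlt : e.natAbs < x.natAbs := by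
    zify
    rw [h3]
    have he1 : 1 ≤ |e| := Int.one_le_abs (by rintro rfl; simp at hU')
    have : |e| ^ 2 = e ^ 2 := sq_abs e
    nlinarith
  rcases ih e f b hlt (IsCoprime.pow_iff (by norm_num) (by norm_num) |>.mp hUV)
    (by linear_combination -h1) with h | h
  · exact hf h
  · exact hb0 h

/-- Fermat's theorem on `x⁴ - y⁴ = z²`, by infinite descent on `|x|`. -/
lemma fermat_sub (N : ℕ) : ∀ x y z : ℤ, x.natAbs = N → IsCoprime x y → x ^ 4 = y ^ 4 + z ^ 2 →
    y = 0 ∨ z = 0 := by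
  induction N using Nat.strong_induction_on with
  | _ N IH =>
  rintro x y z rfl hc h
  have ih : ∀ e f g : ℤ, e.natAbs < x.natAbs → IsCoprime e f → e ^ 4 = f ^ 4 + g ^ 2 →
      f = 0 ∨ g = 0 := fun e f g hlt => IH _ hlt e f g rfl
  by_contra! hcon
  obtain ⟨hy, hz⟩ := hcon
  have hx : x ≠ 0 := by
    rintro rfl
    have : 0 < y ^ 4 := by positivity
    have : 0 < z ^ 2 := by positivity
    linarith
  have hyz : IsCoprime (y ^ 2) z := by
    have h1 : IsCoprime (y ^ 2) (x ^ 4) := hc.symm.pow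
    have h2 : IsCoprime (y ^ 2) (z ^ 2) := by
      have : z ^ 2 = x ^ 4 + y ^ 2 * (-y ^ 2) := by linear_combination -h
      rw [this]
      exact IsCoprime.add_mul_left_right h1 _
    exact (IsCoprime.pow_right_iff (by norm_num)).mp h2
  have hxpos : 0 < x ^ 2 := by positivity
  rcases Int.emod_two_eq_zero_or_one y with hy2 | hy2
  · obtain ⟨w, rfl⟩ : (2 : ℤ) ∣ y := Int.dvd_of_emod_eq_zero hy2
    have hw : w ≠ 0 := by rintro rfl; simp at hy
    have hz2 : z % 2 = 1 := by
      rcases Int.emod_two_eq_zero_or_one z with h0 | h0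
      · exfalso
        have : (2 : ℤ) ∣ 1 := by
          obtain ⟨r, s, hrs⟩ := hyz
          rw [← hrs]
          exact dvd_add (Dvd.intro (r * (2 * w ^ 2)) (by ring))
            (Dvd.dvd.mul_left (Int.dvd_of_emod_eq_zero h0) _)
        omega
      · exact h0
    have hpt : PythagoreanTriple z ((2 * w) ^ 2) (x ^ 2) := by
      unfold PythagoreanTriple; linear_combination -h
    obtain ⟨m, n, h1, h2, h3, h4, h5, hm⟩ := hpt.coprime_classification'
      (Int.isCoprime_iff_gcd_eq_one.mp hyz.symm) hz2 hxpos
    have hmn : IsCoprime m n := Int.isCoprime_iff_gcd_eq_one.mpr h4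
    have hpos : 0 < m * n := by
      have : 0 < w ^ 2 := by positivity
      nlinarith
    have hn : 0 < n := by
      have hm' : 0 < m := lt_of_le_of_ne hm (by rintro rfl; simp at hpos)
      exact (mul_pos_iff_of_pos_left hm').mp hpos
    -- `w² = (M/2)N`, where `M` is the even one of `m, n`
    have key : ∀ M N : ℤ, M % 2 = 0 → N % 2 = 1 → IsCoprime M N → 0 ≤ M → 0 < N →
        x ^ 2 = M ^ 2 + N ^ 2 → (2 * w) ^ 2 = 2 * M * N → False := by
      intro M N hM hN hMN hM0 hN0 hx2 hw2
      obtain ⟨M, rfl⟩ : (2 : ℤ) ∣ M := Int.dvd_of_emod_eq_zero hM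
      have hMN' : IsCoprime M N := hMN.of_mul_left_right
      have h6 : M * N = w ^ 2 := by linarith
      obtain ⟨a, rfl⟩ := sq_of_coprime_mul hMN' h6 (by linarith)
      obtain ⟨b, rfl⟩ := sq_of_coprime_mul hMN'.symm (by rw [mul_comm]; exact h6) hN0.le
      have hb : b % 2 = 1 := by
        rcases Int.emod_two_eq_zero_or_one b with h0 | h0
        · simp [pow_two, Int.mul_emod, h0] at hN
        · exact h0
      have ha := four_descent_step (x := x) hb
        (IsCoprime.pow_iff (by norm_num) (by norm_num) |>.mp hMN')
        (by linear_combination hx2) ih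
      subst ha
      apply hw
      simpa using h6.symm
    rcases h5 with ⟨h5, h6⟩ | ⟨h5, h6⟩
    · exact key m n h5 h6 hmn hm hn h3 h2
    · exact key n m h6 h5 hmn.symm hn.le
        (lt_of_le_of_ne hm (by rintro rfl; simp at hpos)) (by linarith) (by linarith)
  · have hpt : PythagoreanTriple (y ^ 2) z (x ^ 2) := by
      unfold PythagoreanTriple; linear_combination -h
    obtain ⟨m, n, h1, h2, h3, h4, -, hm⟩ := hpt.coprime_classification'
      (Int.isCoprime_iff_gcd_eq_one.mp hyz) (by simp [pow_two, Int.mul_emod, hy2]) hxpos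
    have hn : n ≠ 0 := by rintro rfl; simp at h2; exact hz h2
    have hlt : m.natAbs < x.natAbs := by
      apply Int.natAbs_lt_iff_sq_lt.mpr
      have : 0 < n ^ 2 := by positivity
      linarith
    rcases ih m n (x * y) hlt (Int.isCoprime_iff_gcd_eq_one.mpr h4)
      (by rw [mul_pow, h3, h1]; ring) with h0 | h0
    · exact hn h0
    · exact mul_ne_zero hx hy h0

/-- The integral form of the determination of the rational points on
`y² = (k² + 1)(k⁴ + 6k² + 1)`. -/
lemma genus_two_int {u v w : ℤ} (hc : IsCoprime u v)
    (h : (u ^ 2 + v ^ 2) * (u ^ 4 + 6 * u ^ 2 * v ^ 2 + v ^ 4) = w ^ 2) :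
    u = 0 ∨ v = 0 ∨ u ^ 2 = v ^ 2 := by
  have hsum : ∀ {r s : ℤ}, IsCoprime r s → IsCoprime (r ^ 2 + s ^ 2) (r * s) := by
    intro r s hrs
    apply IsCoprime.mul_right
    · have : IsCoprime (s ^ 2 + r * r) r := by
        exact IsCoprime.add_mul_left_left (hrs.symm.pow_left) _
      convert this using 1; ring
    · have : IsCoprime (r ^ 2 + s * s) s := by
        exact IsCoprime.add_mul_left_left (hrs.pow_left) _
      convert this using 1; ring
  have htwo : ∀ {r : ℤ}, r % 2 = 1 → IsCoprime r 2 := fun {r} hr => ⟨1, -(r / 2), by omega⟩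
  have hsq : ∀ {r : ℤ}, r ^ 2 % 2 = r % 2 := by
    intro r
    rcases Int.emod_two_eq_zero_or_one r with h0 | h0 <;> simp [pow_two, Int.mul_emod, h0]
  by_cases hpar : u % 2 = 1 ∧ v % 2 = 1
  · obtain ⟨m, hm⟩ : (2 : ℤ) ∣ u + v := by omega
    have hu : u = m + (m - v) := by linarith
    obtain ⟨n, hn⟩ : ∃ n, n = m - v := ⟨_, rfl⟩
    have hv : v = m - n := by linarith
    have hu : u = m + n := by linarith
    subst hu hv
    have hmn : IsCoprime m n := by
      obtain ⟨r, s, hrs⟩ := hc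
      exact ⟨r + s, r - s, by linear_combination hrs⟩
    have h4 : (4 : ℤ) ∣ w := by
      have : (4 : ℤ) ^ 2 ∣ w ^ 2 := ⟨(m ^ 2 + n ^ 2) * (m ^ 4 + n ^ 4), by rw [← h]; ring⟩
      exact (Int.pow_dvd_pow_iff (by norm_num)).mp this
    obtain ⟨w, rfl⟩ := h4
    have h5 : (m ^ 4 + n ^ 4) * (m ^ 2 + n ^ 2) = w ^ 2 := by linarith
    have hodd : (m ^ 2 + n ^ 2) % 2 = 1 := by
      have := @hsq m
      have := @hsq n
      omega
    have hcop : IsCoprime (m ^ 4 + n ^ 4) (m ^ 2 + n ^ 2) := by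
      have h6 : IsCoprime (m ^ 2 + n ^ 2) (2 * (m * n) ^ 2) :=
        (htwo hodd).mul_right (hsum hmn).pow_right
      have h7 := (IsCoprime.neg_right h6).add_mul_left_right (m ^ 2 + n ^ 2)
      have e : m ^ 4 + n ^ 4 = -(2 * (m * n) ^ 2) + (m ^ 2 + n ^ 2) * (m ^ 2 + n ^ 2) := by ring
      rw [e]; exact h7.symm
    obtain ⟨d, hd⟩ := sq_of_coprime_mul hcop h5 (by positivity)
    by_cases hm0 : m = 0
    · subst hm0; right; right; ring
    by_cases hn0 : n = 0
    · subst hn0; right; right; ring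
    exact absurd hd (not_fermat_42 hm0 hn0)
  · have hodd : (u ^ 2 + v ^ 2) % 2 = 1 := by
      have := @hsq u
      have := @hsq v
      have : ¬ (u % 2 = 0 ∧ v % 2 = 0) := by
        rintro ⟨h1, h2⟩
        obtain ⟨r, s, hrs⟩ := hc
        have : (2 : ℤ) ∣ 1 := by
          rw [← hrs]
          exact dvd_add (Dvd.dvd.mul_left (Int.dvd_of_emod_eq_zero h1) _)
            (Dvd.dvd.mul_left (Int.dvd_of_emod_eq_zero h2) _)
        omega
      omega
    have hcop : IsCoprime (u ^ 4 + 6 * u ^ 2 * v ^ 2 + v ^ 4) (u ^ 2 + v ^ 2) := by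
      have h6 : IsCoprime (u ^ 2 + v ^ 2) (2 ^ 2 * (u * v) ^ 2) :=
        (htwo hodd).pow_right.mul_right (hsum hc).pow_right
      have h7 := h6.add_mul_left_right (u ^ 2 + v ^ 2)
      have e : u ^ 4 + 6 * u ^ 2 * v ^ 2 + v ^ 4
          = 2 ^ 2 * (u * v) ^ 2 + (u ^ 2 + v ^ 2) * (u ^ 2 + v ^ 2) := by ring
      rw [e]; exact h7.symm
    obtain ⟨d, hd⟩ := sq_of_coprime_mul hcop (by rw [mul_comm]; exact h) (by positivity)
    have hodd' : (u ^ 2 - v ^ 2) % 2 = 1 := by omega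
    have hcop' : IsCoprime d (u ^ 2 - v ^ 2) := by
      have h6 : IsCoprime (u ^ 2 - v ^ 2) (u * v) := by
        apply IsCoprime.mul_right
        · have : IsCoprime (-v ^ 2 + u * u) u :=
            IsCoprime.add_mul_left_left (hc.symm.pow_left.neg_left) _
          convert this using 1; ring
        · have : IsCoprime (u ^ 2 + v * (-v)) v :=
            IsCoprime.add_mul_left_left (hc.pow_left) _
          convert this using 1; ring
      have h7 : IsCoprime (u ^ 2 - v ^ 2) (2 ^ 3 * (u * v) ^ 2) :=
        (htwo hodd').pow_right.mul_right h6.pow_right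
      have h8 := h7.add_mul_left_right (u ^ 2 - v ^ 2)
      have h9 : IsCoprime (u ^ 2 - v ^ 2) (d ^ 2) := by
        have e : d ^ 2 = 2 ^ 3 * (u * v) ^ 2 + (u ^ 2 - v ^ 2) * (u ^ 2 - v ^ 2) := by
          rw [← hd]; ring
        rw [e]; exact h8
      exact ((IsCoprime.pow_right_iff (by norm_num)).mp h9).symm
    have hd4 : d ^ 4 = (u ^ 2 - v ^ 2) ^ 4 + (4 * (u * v) * (u ^ 2 + v ^ 2)) ^ 2 := by
      have : d ^ 4 = (d ^ 2) ^ 2 := by ring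
      rw [this, ← hd]; ring
    rcases fermat_sub _ d _ _ rfl hcop' hd4 with h0 | h0
    · omega
    · have h1 : u ^ 2 + v ^ 2 ≠ 0 := by omega
      have h2 : u * v = 0 := by simpa [h1] using h0
      rcases mul_eq_zero.mp h2 with h3 | h3
      · exact Or.inl h3
      · exact Or.inr (Or.inl h3)

/-- The affine rational points on `y² = (k² + 1)(k⁴ + 6k² + 1)` have `k = 0` or `k = ±1`. -/
lemma genus_two_rat {k y : ℚ} (h : (k ^ 2 + 1) * (k ^ 4 + 6 * k ^ 2 + 1) = y ^ 2) :
    k = 0 ∨ k ^ 2 = 1 := by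
  have hd : (k.den : ℚ) ≠ 0 := by exact_mod_cast k.den_ne_zero
  have hk : k * k.den = k.num := Rat.mul_den_eq_num k
  have h1 : (((k.num ^ 2 + (k.den : ℤ) ^ 2) *
      (k.num ^ 4 + 6 * k.num ^ 2 * (k.den : ℤ) ^ 2 + (k.den : ℤ) ^ 4) : ℤ) : ℚ)
      = (y * k.den ^ 3) ^ 2 := by
    push_cast
    rw [← hk, mul_pow y, ← h]
    ring
  -- a rational square that is an integer is the square of an integer
  have h2 : IsSquare ((k.num ^ 2 + (k.den : ℤ) ^ 2) *
      (k.num ^ 4 + 6 * k.num ^ 2 * (k.den : ℤ) ^ 2 + (k.den : ℤ) ^ 4)) := by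
    rw [← Rat.isSquare_intCast_iff, h1]
    exact IsSquare.sq _
  obtain ⟨w, hw⟩ := h2
  have hc : IsCoprime k.num (k.den : ℤ) :=
    Int.isCoprime_iff_gcd_eq_one.mpr (by simpa [Int.gcd] using k.reduced)
  rcases genus_two_int hc (w := w) (by rw [hw]; ring) with h0 | h0 | h0
  · left; exact Rat.num_eq_zero.mp h0
  · exact absurd (by exact_mod_cast h0) k.den_ne_zero
  · right
    have h3 : ((k.num : ℚ)) ^ 2 = (k.den : ℚ) ^ 2 := by exact_mod_cast h0
    rw [← hk, mul_pow] at h3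
    exact mul_right_cancel₀ (pow_ne_zero 2 hd) (by linarith)

theorem no_rational_root_of_second_cuboid_polynomial :
    ∀ p q : ℕ, 0 < p → 0 < q → Nat.Coprime p q → p ≠ q →
      ¬ ∃ t : ℚ, cuboidPoly (p : ℚ) (q : ℚ) t = 0 := by
  rintro p q hp0 hq0 - hpq ⟨t, ht⟩
  have hp : (0 : ℚ) < p := by exact_mod_cast hp0
  have hq : (0 : ℚ) < q := by exact_mod_cast hq0
  have hne : (p : ℚ) ^ 2 - q ^ 2 ≠ 0 := by
    have : (p : ℚ) ≠ q := by exact_mod_cast hpq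
    intro h
    exact this ((sq_eq_sq₀ hp.le hq.le).mp (by linarith))
  generalize (p : ℚ) = p at *
  generalize (q : ℚ) = q at *
  unfold cuboidPoly at ht
  have ht0 : t ≠ 0 := by
    rintro rfl
    have : 0 < p ^ 10 * q ^ 10 := by positivity
    norm_num at ht
    rcases ht with h | h <;> simp_all
  set X : ℚ := t ^ 2 + p ^ 2 * q ^ 2 with hX
  set Y : ℚ := t ^ 2 - p ^ 2 * q ^ 2 with hY
  have hX0 : 0 < X := by positivity
  have hroot : Y * ((t ^ 2 + p ^ 4) * (t ^ 2 + q ^ 4)) ^ 2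
      = 4 * t ^ 2 * X ^ 3 * ((p ^ 2 - q ^ 2) * (p ^ 2 + q ^ 2)) := by
    rw [hX, hY]; linear_combination ht
  obtain ⟨k, hk⟩ : ∃ k : ℚ, k * X = (p ^ 2 - q ^ 2) * t :=
    ⟨(p ^ 2 - q ^ 2) * t / X, div_mul_cancel₀ _ hX0.ne'⟩
  have hk0 : k ≠ 0 := by
    rintro rfl
    rw [zero_mul] at hk
    exact mul_ne_zero hne ht0 hk.symm
  have hprod : (t ^ 2 + p ^ 4) * (t ^ 2 + q ^ 4) = (1 + k ^ 2) * X ^ 2 := by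
    have : (t ^ 2 + p ^ 4) * (t ^ 2 + q ^ 4) = X ^ 2 + ((p ^ 2 - q ^ 2) * t) ^ 2 := by
      rw [hX]; ring
    rw [this, ← hk]; ring
  have hrel : (1 + k ^ 2) ^ 2 * Y = 4 * k * t * (p ^ 2 + q ^ 2) := by
    rw [hprod] at hroot
    apply mul_right_cancel₀ (pow_ne_zero 4 hX0.ne')
    linear_combination hroot - 4 * t * X ^ 3 * (p ^ 2 + q ^ 2) * hk
  have hY0 : Y ≠ 0 := by
    intro h0
    rw [h0, mul_zero] at hrel
    have : 4 * k * t * (p ^ 2 + q ^ 2) ≠ 0 := by positivity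
    exact this hrel.symm
  have hXY : X ^ 2 - Y ^ 2 = 4 * t ^ 2 * (p * q) ^ 2 := by rw [hX, hY]; ring
  -- eliminates `X` and `p² ± q²`, using `(p² + q²)² - (p² - q²)² = 4p²q²`
  have hmain : (8 * t * (p * q) * k) ^ 2 * (1 + k ^ 2)
      = Y ^ 2 * (1 - k ^ 2) ^ 2 * (k ^ 4 + 6 * k ^ 2 + 1) := by
    have h1 : ((1 + k ^ 2) ^ 2 * Y) ^ 2 - 16 * k ^ 2 * (k * X) ^ 2
        = 64 * k ^ 2 * t ^ 2 * (p * q) ^ 2 := by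
      rw [hrel, hk]; ring
    linear_combination -h1 - 16 * k ^ 4 * hXY
  have hk1 : k ^ 2 ≠ 1 := by
    intro h0
    rw [h0] at hmain
    have : (8 * t * (p * q) * k) ^ 2 * (1 + 1) ≠ 0 := by positivity
    apply this
    rw [hmain]; ring
  have hk1' : 1 - k ^ 2 ≠ 0 := fun h0 => hk1 (by linarith)
  have hcurve : (k ^ 2 + 1) * (k ^ 4 + 6 * k ^ 2 + 1)
      = (8 * t * (p * q) * k * (1 + k ^ 2) / (Y * (1 - k ^ 2))) ^ 2 := by
    rw [div_pow, eq_div_iff (pow_ne_zero 2 (mul_ne_zero hY0 hk1'))]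
    linear_combination -(1 + k ^ 2) * hmain
  rcases genus_two_rat hcurve with h0 | h0
  · exact hk0 h0
  · exact hk1 h0
end

section
/- For all coprime positive integers p and q with p ≠ q, there is no rational number c such that the polynomial t^2 - c divides Q_{p,q}(t) in ℚ[t]; that is, Q_{p,q}(t) has no even quadratic factor over ℚ. -/
/-!
`X^2 - c` divides `Q_{p,q}` exactly when `c` is a root of the quintic `R` with `Q_{p,q}(t) = R(t^2)`.
That quintic can be rewritten as

  `(c - p²q²)(c + p⁴)²(c + q⁴)² = 4c(c + p²q²)³(p⁴ - q⁴)`.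

With `a = (c - p²q²)/(c + p²q²)` and `b = (p² - q²)/(p² + q²)` it becomes
`4b(1 - a²)(1 - b²) = a(1 - a²b²)²`. Put `n = ab`. For fixed `n` this is a quadratic equation
in `b²` whose discriminant is a square times `1 - n`, so `1 - n = k²` with `k` rational, and then

  `2b² = (k + 1) f(k)`, where `f(k) = 2 - 2k + 2k³ - k⁴`, and `2(1 - b²) = k²(2 - k²)(1 - k)`.

Here `1 - b² = (2pq/(p² + q²))²` is a square. The nondegeneracy `p ≠ q` is `b ≠ 0`.

Write `k = m/n` in lowest terms. The homogenized `f` takes a value `F` coprime to `n(m + n)`, so the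
first equation makes `F` equal to `±1` or `±2` times a square. Multiplying the two equations, the
same sign and factor of two turn `(2n² - m²)(n² - m²)` into a square. Congruences modulo `8` leave
two possibilities:
* `n² - u² = m²`, `n² + u² = v²`, impossible by Fermat's descent (`no_congruum`);
* `n² - 2μ² = x²`, `n² - 4μ² = y²`, which yields a solution of `g⁴ + h⁴ = x²`
  (`no_double_congruum`).
-/

open Polynomial

/-- Sharipov's second cuboid polynomial `Q_{p,q}(t)` as an element of `ℚ[t]`. -/
noncomputable def cuboidPolynomial (p q : ℚ) : Polynomial ℚ :=
  X^10 + C ((2*q^2 + p^2) * (3*q^2 - 2*p^2)) * X^8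
    + C (q^8 + 10*p^2*q^6 + 4*p^4*q^4 - 14*p^6*q^2 + p^8) * X^6
    - C (p^2*q^2 * (q^8 - 14*p^2*q^6 + 4*p^4*q^4 + 10*p^6*q^2 + p^8)) * X^4
    - C (p^6*q^6 * (q^2 + 2*p^2) * (-2*q^2 + 3*p^2)) * X^2
    - C (p^10*q^10)

/-! ### Reduction to two equations in one rational parameter -/

/-- A root `c` of the quintic `R`, `Q_{p,q}(t) = R(t²)`, in the rewritten form of the quintic. -/
lemma eval_eq_zero (p q c : ℚ) (h : (X^2 - C c) ∣ cuboidPolynomial p q) :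
    (c - p^2*q^2) * (c + p^4)^2 * (c + q^4)^2 = 4 * c * (c + p^2*q^2)^3 * (p^4 - q^4) := by
  -- `c` need not be a square in `ℚ`, so the polynomial is evaluated at a complex square root of it.
  obtain ⟨z, hz⟩ := IsAlgClosed.exists_pow_nat_eq (c : ℂ) (n := 2) (by norm_num)
  obtain ⟨R, hR⟩ := h
  have h1 := congrArg (aeval z) hR
  simp only [cuboidPolynomial, map_add, map_sub, map_mul, map_pow, aeval_X, aeval_C, hz,
    eq_ratCast, sub_self, zero_mul] at h1
  have h2 : (((c - p^2*q^2) * (c + p^4)^2 * (c + q^4)^2 : ℚ) : ℂ)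
      = ((4 * c * (c + p^2*q^2)^3 * (p^4 - q^4) : ℚ) : ℂ) := by
    have e4 : z^4 = (c:ℂ)^2 := by rw [← hz]; ring
    have e6 : z^6 = (c:ℂ)^3 := by rw [← hz]; ring
    have e8 : z^8 = (c:ℂ)^4 := by rw [← hz]; ring
    have e10 : z^10 = (c:ℂ)^5 := by rw [← hz]; ring
    rw [e4, e6, e8, e10] at h1
    push_cast at h1 ⊢
    linear_combination h1
  exact_mod_cast h2

/-- The parameter `k`, a square root of `1 - ab` where `a = (c - p²q²)/(c + p²q²)` and
`b = (p² - q²)/(p² + q²)`. -/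
lemma exists_k (p q c : ℚ) (hp : 0 < p) (hq : 0 < q) (hpq : p ≠ q)
    (h : (c - p^2*q^2) * (c + p^4)^2 * (c + q^4)^2
      = 4 * c * (c + p^2*q^2)^3 * (p^4 - q^4)) :
    ∃ k b d : ℚ, b ≠ 0 ∧ d ≠ 0 ∧ (k + 1) * (2 - 2*k + 2*k^3 - k^4) = 2 * b^2 ∧
      (1 - k) * (2 - k^2) * k^2 = 2 * d^2 := by
  have hd4 : p^4 - q^4 ≠ 0 := by
    intro h0
    exact hpq ((pow_left_inj₀ hp.le hq.le (by norm_num : (4:ℕ) ≠ 0)).1 (by linarith))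
  have hc0 : c ≠ 0 := by
    rintro rfl
    have : p^10 * q^10 = 0 := by
      linear_combination -h
    have h10 : p^10 * q^10 ≠ 0 := by positivity
    exact h10 this
  have hc1 : c - p^2*q^2 ≠ 0 := by
    intro h0
    have : 4 * c * (c + p^2*q^2)^3 * (p^4 - q^4) = 0 := by rw [← h, h0]; ring
    have hc : c = p^2*q^2 := by linarith
    have h3 : c + p^2*q^2 ≠ 0 := by rw [hc]; positivity
    simp_all
  have hc2 : c + p^2*q^2 ≠ 0 := by
    intro h0
    have hc : c = -(p^2*q^2) := by linarith
    have h3 : p^2*q^2*p^4*q^4*(p^2-q^2)^4 = 0 := by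
      subst hc
      linear_combination (-1/2) * h
    have : p^2 - q^2 ≠ 0 := by
      intro h0; apply hd4; linear_combination (p^2+q^2)*h0
    have : p^2*q^2*p^4*q^4*(p^2-q^2)^4 ≠ 0 := by positivity
    contradiction
  have hs : p^2 + q^2 ≠ 0 := by positivity
  have hpqd : p^2 - q^2 ≠ 0 := by
    intro h0; apply hd4; linear_combination (p^2+q^2)*h0
  obtain ⟨a, ha⟩ : ∃ a, a = (c - p^2*q^2) / (c + p^2*q^2) := ⟨_, rfl⟩
  obtain ⟨b, hb⟩ : ∃ b, b = (p^2 - q^2) / (p^2 + q^2) := ⟨_, rfl⟩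
  have ha0 : a ≠ 0 := by rw [ha]; positivity
  have hb0 : b ≠ 0 := by rw [hb]; positivity
  have ha1 : 1 - a^2 = 4*c*p^2*q^2/(c + p^2*q^2)^2 := by rw [ha]; field_simp; ring
  have hb1 : 1 - b^2 = (2*p*q/(p^2+q^2))^2 := by rw [hb]; field_simp; ring
  have hab : 4 * b * (1 - a^2) * (1 - b^2) = a * (1 - a^2*b^2)^2 := by
    rw [ha1, hb1, ha, hb]
    field_simp
    linear_combination (-16*p^4*q^4) * h
  have ha10 : 1 - a^2 ≠ 0 := by rw [ha1]; positivity
  have hd : 2*p*q/(p^2+q^2) ≠ 0 := by positivity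
  have hn : 1 - a^2*b^2 ≠ 0 := by
    intro h0
    rw [h0] at hab
    have : 4 * b * (1 - a^2) * (1 - b^2) ≠ 0 := by rw [hb1]; positivity
    apply this; rw [hab]; ring
  -- Solving the quadratic equation for `b²` at fixed `n = ab` gives
  -- `2b² = 1 + n² + (1 - n²)k` with `k² = 1 - n`; this equation is taken as the definition of `k`.
  obtain ⟨k, hk⟩ : ∃ k, k = (2*b^2 - 1 - a^2*b^2) / (1 - a^2*b^2) := ⟨_, rfl⟩
  have hk' : k * (1 - a^2*b^2) = 2*b^2 - 1 - a^2*b^2 := by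
    rw [hk, div_mul_cancel₀ _ hn]
  have hk2 : k^2 = 1 - a*b := by
    have : (k*(1 - a^2*b^2))^2 = (1 - a*b) * (1 - a^2*b^2)^2 := by
      rw [hk']; linear_combination -b * hab
    apply mul_right_cancel₀ (pow_ne_zero 2 hn)
    linear_combination this
  have hn' : a*b = 1 - k^2 := by linarith
  have hn2 : a^2*b^2 = (1 - k^2)^2 := by rw [← hn']; ring
  rw [hn2] at hk'
  refine ⟨k, b, _, hb0, hd, ?_, ?_⟩
  · linear_combination hk'
  · rw [← hb1]; linear_combination -hk'

/-! ### Coprime factors of squares, squares modulo powers of two -/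

lemma isCoprime_split {a b c : ℤ} (h : IsCoprime a b) (hc : a * b = c^2) :
    ∃ e, a = e^2 ∨ a = -e^2 :=
  Int.sq_of_gcd_eq_one (Int.isCoprime_iff_gcd_eq_one.1 h) hc

lemma nonneg_split {a b c : ℤ} (h : IsCoprime a b) (hc : a * b = c^2) (ha : 0 < a) :
    (∃ e, a = e^2) ∧ ∃ f, b = f^2 := by
  obtain ⟨e, he | he⟩ := isCoprime_split h hc
  · obtain ⟨f, hf | hf⟩ := isCoprime_split h.symm (by rw [mul_comm]; exact hc)
    · exact ⟨⟨e, he⟩, f, hf⟩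
    · refine ⟨⟨e, he⟩, 0, ?_⟩
      nlinarith [sq_nonneg c, sq_nonneg f]
  · nlinarith [sq_nonneg e]

lemma isCoprime_two {n : ℤ} (hn : Odd n) : IsCoprime n 2 := by
  obtain ⟨j, rfl⟩ := hn
  exact ⟨1, -j, by ring⟩

lemma sq_mod_four {e : ℤ} (he : e % 2 = 0) : e^2 % 4 = 0 := by
  obtain ⟨j, rfl⟩ : ∃ j, e = 2 * j := ⟨e / 2, by omega⟩
  rw [show (2*j)^2 = 4*j^2 by ring]; omega

lemma sq_mod_eight {e : ℤ} (he : e % 2 = 1) : e^2 % 8 = 1 := by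
  have h : e % 8 = 1 ∨ e % 8 = 3 ∨ e % 8 = 5 ∨ e % 8 = 7 := by omega
  rcases h with h | h | h | h <;> simp [pow_two, Int.mul_emod, h]

/-! ### The two descents -/

lemma quartic_step {e f g : ℤ} (he : e ≠ 0) (hef : IsCoprime e f) (hodd : Odd (e^2 + f^2))
    (h : e^4 - f^4 = g^2) : ∃ v m, e^2 + f^2 = v^2 ∧ e^2 - f^2 = m^2 := by
  have hco : IsCoprime (e^2 + f^2) (e^2 - f^2) := by
    rw [show e^2 - f^2 = 2*(-f^2) + (e^2+f^2)*1 by ring]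
    refine IsCoprime.add_mul_left_right ((isCoprime_two hodd).mul_right ?_) _
    rw [show e^2 + f^2 = e^2 + (-f^2)*(-1) by ring]
    exact hef.pow.neg_right.add_mul_left_left _
  have hpos : 0 < e^2 + f^2 := by positivity
  obtain ⟨⟨v, hv⟩, m, hm⟩ := nonneg_split (c := g) hco (by rw [← h]; ring) hpos
  exact ⟨v, m, hv, hm⟩

/-- Fermat's theorem that a congruum is not a square. Setting `v = X + Y`, `m = X - Y`, `u = 2t`, the
equations give the primitive Pythagorean triple `X² + Y² = n²` with area `t²`. Its parameters `a, b`
satisfy `ab(a² - b²) = t²`, so `a`, `b`, `a² - b²` are squares up to sign, and `quartic_step` turns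
these into a solution with smaller `|n|`. -/
lemma no_congruum : ∀ (N : ℕ) (n u v m : ℤ), n.natAbs = N → u ≠ 0 → IsCoprime n u →
    n^2 + u^2 = v^2 → n^2 - u^2 = m^2 → False := by
  intro N
  induction N using Nat.strong_induction_on with
  | _ N ih =>
  intro n u v m hN hu hco hv hm
  have hpar : u % 2 = 0 ∧ v % 2 = 1 ∧ m % 2 = 1 := by
    -- Both `n` and `u` even contradicts coprimality; modulo `4` only `n` odd, `u` even remains.
    have hnu : ¬ (n % 2 = 0 ∧ u % 2 = 0) := fun h => by
      have := hco.isUnit_of_dvd' (x := 2) (by omega) (by omega)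
      rw [Int.isUnit_iff] at this
      omega
    have key : ∀ x : ℤ, (x % 2 = 0 ∧ x^2 % 4 = 0) ∨ (x % 2 = 1 ∧ x^2 % 8 = 1) := fun x => by
      rcases Int.emod_two_eq_zero_or_one x with h | h
      · exact .inl ⟨h, sq_mod_four h⟩
      · exact .inr ⟨h, sq_mod_eight h⟩
    have kn := key n
    have ku := key u
    have kv := key v
    have km := key m
    omega
  obtain ⟨t, ht⟩ : ∃ t, u = 2 * t := ⟨u / 2, by omega⟩
  obtain ⟨X, hX⟩ : ∃ X, v + m = 2 * X := ⟨(v + m) / 2, by omega⟩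
  obtain ⟨Y, hY⟩ : ∃ Y, v - m = 2 * Y := ⟨(v - m) / 2, by omega⟩
  have hvXY : v = X + Y := by linarith
  have hmXY : m = X - Y := by linarith
  have hpt : X^2 + Y^2 = n^2 := by
    rw [hvXY] at hv; rw [hmXY] at hm; linarith
  have hXY : X * Y = 2 * t^2 := by
    rw [hvXY] at hv; rw [hmXY] at hm; rw [ht] at hv hm; linarith
  have ht0 : t ≠ 0 := by rintro rfl; simp at ht; exact hu ht
  have hcoXY : IsCoprime X Y := by
    have h1 : IsCoprime (n^2) (X * Y) := by
      have : X * Y * 2 = u^2 := by rw [hXY, ht]; ring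
      have h2 : IsCoprime (n^2) (X * Y * 2) := by rw [this]; exact hco.pow
      exact h2.of_mul_right_left
    have h3 := h1.of_mul_right_left
    rw [← hpt, show X^2 + Y^2 = Y^2 + X * X by ring] at h3
    have h4 : IsCoprime (Y^2) X := by simpa using h3.add_mul_left_left (-X)
    exact ((IsCoprime.pow_left_iff (by norm_num)).1 h4).symm
  obtain ⟨a, b, hab, hn, hcab, hparab⟩ := PythagoreanTriple.coprime_classification.1
    ⟨(by unfold PythagoreanTriple; linear_combination hpt : PythagoreanTriple X Y n),
      Int.isCoprime_iff_gcd_eq_one.1 hcoXY⟩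
  have hcab : IsCoprime a b := Int.isCoprime_iff_gcd_eq_one.2 hcab
  have harea : a * b * (a^2 - b^2) = t^2 := by
    rcases hab with ⟨h1, h2⟩ | ⟨h1, h2⟩ <;> rw [h1, h2] at hXY <;> linarith
  have hc1 : IsCoprime a (a^2 - b^2) := by
    rw [show a^2 - b^2 = -b^2 + a * a by ring]
    exact hcab.pow_right.neg_right.add_mul_left_right _
  have hc2 : IsCoprime b (a^2 - b^2) := by
    rw [show a^2 - b^2 = a^2 + b * (-b) by ring]
    exact hcab.symm.pow_right.add_mul_left_right _
  obtain ⟨e, he⟩ := isCoprime_split (c := t) (hcab.mul_right hc1) (by rw [← harea]; ring)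
  obtain ⟨f, hf⟩ := isCoprime_split (c := t) (hcab.symm.mul_right hc2) (by rw [← harea]; ring)
  obtain ⟨g, hg⟩ := isCoprime_split (c := t) (hc1.mul_left hc2).symm (by rw [← harea]; ring)
  have ha2 : a^2 = e^4 := by rcases he with h | h <;> rw [h] <;> ring
  have hb2 : b^2 = f^4 := by rcases hf with h | h <;> rw [h] <;> ring
  have he0 : e ≠ 0 := by
    rintro rfl
    have : a = 0 := by simpa using he
    rw [this] at harea
    exact ht0 (by simpa using harea.symm)
  have hf0 : f ≠ 0 := by
    rintro rfl
    have : b = 0 := by simpa using hf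
    rw [this] at harea
    exact ht0 (by simpa using harea.symm)
  have hef : IsCoprime e f := by
    have : IsCoprime (a^2) (b^2) := hcab.pow
    rw [ha2, hb2] at this
    exact (IsCoprime.pow_iff (by norm_num) (by norm_num)).1 this
  have hodd : Odd (e^2 + f^2) := by
    have h1 : Odd (a^2 + b^2) := by
      rcases hparab with ⟨h1, h2⟩ | ⟨h1, h2⟩
      · exact (Int.even_iff.2 h1 |>.pow_of_ne_zero (by norm_num)).add_odd (Int.odd_iff.2 h2).pow
      · exact (Int.odd_iff.2 h1).pow.add_even (Int.even_iff.2 h2 |>.pow_of_ne_zero (by norm_num))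
    rw [ha2, hb2] at h1
    simp only [Int.odd_add, Int.odd_pow', Int.even_pow', ne_eq, OfNat.ofNat_ne_zero,
      not_false_eq_true] at h1 ⊢
    exact h1
  have hn2 : n^2 = (e^4 + f^4)^2 := by
    rw [← ha2, ← hb2]; rcases hn with h | h <;> rw [h] <;> ring
  have he1 : 0 < e^2 := by positivity
  have hf1 : 0 < f^2 := by positivity
  have hlt : ∀ x y : ℤ, 0 < x^2 → 0 < y^2 → n^2 = (x^4 + y^4)^2 → x.natAbs < N := by
    intro x y hx hy hxy
    rw [← hN, Int.natAbs_lt_iff_sq_lt, hxy]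
    have h1 : x^2 + 1 ≤ x^4 + y^4 := by nlinarith
    nlinarith
  rcases hg with hg | hg
  · obtain ⟨v', m', hv', hm'⟩ := quartic_step (g := g) he0 hef hodd (by linarith)
    exact ih _ (hlt e f he1 hf1 hn2) e f v' m' rfl hf0 hef hv' hm'
  · obtain ⟨v', m', hv', hm'⟩ := quartic_step (g := g) hf0 hef.symm
      (by rwa [add_comm]) (by linarith)
    exact ih _ (hlt f e hf1 he1 (by rw [hn2]; ring)) f e v' m' rfl he0 hef.symm hv' hm'

/-- Since `y² + (2μ)² = n²`, `y = g² - h²` and `μ = gh`, whence `x² = y² + 2μ² = g⁴ + h⁴`. -/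
lemma no_double_congruum (n μ x y : ℤ) (hn : Odd n) (hμ : μ ≠ 0) (hco : IsCoprime n μ)
    (hx : n^2 - 2*μ^2 = x^2) (hy : n^2 - 4*μ^2 = y^2) : False := by
  have hpt : PythagoreanTriple y (2*μ) n := by
    unfold PythagoreanTriple; linear_combination -hy
  have hyo : y % 2 = 1 := by
    have : Odd (y^2) := by rw [← hy]; exact Odd.sub_even (hn.pow) ⟨2*μ^2, by ring⟩
    rw [Int.odd_pow' (by norm_num)] at this
    exact Int.odd_iff.1 this
  have hco2 : IsCoprime y (2*μ) := by
    have h2 : IsCoprime n (2*μ) := by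
      refine IsCoprime.mul_right ?_ hco
      exact isCoprime_two hn
    have : IsCoprime (y^2) (2*μ) := by
      rw [← hy, show n^2 - 4*μ^2 = n^2 + (2*μ) * (-2*μ) by ring]
      exact (IsCoprime.add_mul_left_left (h2.pow_left) _)
    exact (IsCoprime.pow_left_iff (by norm_num)).1 this
  obtain ⟨g, h, hg | hg, -⟩ := PythagoreanTriple.coprime_classification.1
    ⟨hpt, Int.isCoprime_iff_gcd_eq_one.1 hco2⟩
  · have hμ' : μ = g * h := by linarith [hg.2]
    have hg0 : g ≠ 0 := by rintro rfl; simp_all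
    have hh0 : h ≠ 0 := by rintro rfl; simp_all
    apply not_fermat_42 hg0 hh0 (c := x)
    rw [hg.1, hμ'] at hy
    rw [hμ'] at hx
    linear_combination hx - hy
  · have : y % 2 = 0 := by rw [hg.1, mul_assoc]; omega
    omega

/-! ### Excluding the parameter -/

/-- The two equations for `k` have no rational solution. In the proof `k = m/n`, `F` and `H` are the
homogenizations of `2 - 2k + 2k³ - k⁴` and `(2 - k²)(1 - k²)`. -/
lemma no_k (k b d : ℚ) (hb : b ≠ 0) (hd : d ≠ 0)
    (h1 : (k + 1) * (2 - 2*k + 2*k^3 - k^4) = 2 * b^2)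
    (h2 : (1 - k) * (2 - k^2) * k^2 = 2 * d^2) : False := by
  have hk0 : k ≠ 0 := by
    rintro rfl
    apply hd; simpa using h2.symm
  obtain ⟨m, hm⟩ : ∃ m : ℤ, m = k.num := ⟨_, rfl⟩
  obtain ⟨n, hn⟩ : ∃ n : ℤ, n = (k.den : ℤ) := ⟨_, rfl⟩
  have hn0 : 0 < n := by rw [hn]; exact_mod_cast k.den_pos
  have hmn : IsCoprime m n := by
    rw [hm, hn, Int.isCoprime_iff_gcd_eq_one]; exact k.reduced
  have hkmn : k = m / n := by rw [hm, hn]; exact_mod_cast (Rat.num_div_den k).symm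
  have hm0 : m ≠ 0 := by rintro rfl; simp at hkmn; exact hk0 hkmn
  have hnq : (n:ℚ) ≠ 0 := by exact_mod_cast hn0.ne'
  have hmq : (m:ℚ) ≠ 0 := by exact_mod_cast hm0
  obtain ⟨F, hF⟩ : ∃ F : ℤ, F = 2*n^4 - 2*m*n^3 + 2*m^3*n - m^4 := ⟨_, rfl⟩
  obtain ⟨H, hH⟩ : ∃ H : ℤ, H = (2*n^2 - m^2) * (n^2 - m^2) := ⟨_, rfl⟩
  have hsq1 : IsSquare (2 * (n * (m + n)) * F) := by
    rw [← Rat.isSquare_intCast_iff]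
    refine ⟨2 * b * n^3, ?_⟩
    rw [hF]; push_cast
    rw [hkmn] at h1
    field_simp at h1
    linear_combination 2*n*h1
  have hFne : n * (m+n) * F ≠ 0 := by
    intro h0
    have : (n : ℚ) * (m + n) * F = 0 := by exact_mod_cast h0
    rw [hF] at this; push_cast at this
    rw [hkmn] at h1
    field_simp at h1
    have h3 : 2 * (n:ℚ)^6 * b^2 ≠ 0 := by positivity
    apply h3; linear_combination this - n*h1
  have hsq2 : IsSquare (H * F) := by
    rw [← Rat.isSquare_intCast_iff]
    refine ⟨2 * b * d * n^4 / k, ?_⟩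
    have h12 : (1 - k^2) * (2 - k^2) * (2 - 2*k + 2*k^3 - k^4) * k^2 = 4*b^2*d^2 := by
      linear_combination (1 - k) * (2 - k^2) * k^2 * h1 + 2*b^2*h2
    rw [hF, hH]; push_cast
    have e : (m : ℚ) = k * n := by rw [hkmn]; field_simp
    rw [e]
    field_simp
    linear_combination h12
  have hF0 : F ≠ 0 := fun h => hFne (by rw [h]; ring)
  have hcoF : IsCoprime (n * (m + n)) F := by
    refine IsCoprime.mul_left ?_ ?_
    · rw [hF, show 2*n^4 - 2*m*n^3 + 2*m^3*n - m^4 = -m^4 + n*(2*n^3-2*m*n^2+2*m^3) by ring]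
      exact (hmn.symm.pow_right.neg_right).add_mul_left_right _
    · rw [hF, show 2*n^4 - 2*m*n^3 + 2*m^3*n - m^4
        = n^4 + (m+n)*(-m^3+3*m^2*n-3*m*n^2+n^3) by ring]
      refine (IsCoprime.pow_right ?_).add_mul_left_right _
      simpa using hmn.add_mul_right_left 1
  have hmn2 : IsCoprime (2*n^2 - m^2) (n^2 - m^2) := by
    rw [show 2*n^2 - m^2 = n^2 + (n^2-m^2)*1 by ring]
    refine IsCoprime.add_mul_left_left ?_ _
    rw [show n^2 - m^2 = -m^2 + n^2*1 by ring]
    exact (hmn.symm.pow.neg_right).add_mul_left_right _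
  have key : ∀ a c e : ℤ, e ≠ 0 → IsSquare (a * (c * e^2)) → IsSquare (a * c) := by
    intro a c e he ⟨r, hr⟩
    rw [← Rat.isSquare_intCast_iff]
    have : (e:ℚ) ≠ 0 := by exact_mod_cast he
    refine ⟨r / e, ?_⟩
    field_simp
    exact_mod_cast (by linear_combination hr)
  have hnm : n^2 - m^2 ≠ 0 := by
    intro h0
    have h3 : (n - m) * (n + m) = 0 := by linear_combination h0
    rcases mul_eq_zero.1 h3 with h3 | h3
    · have : k = 1 := by
        rw [hkmn, show n = m by linarith]; field_simp
      rw [this] at h2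
      apply hd; simpa using h2.symm
    · apply hFne; rw [add_comm m n, h3]; ring
  have sq8 : ∀ x : ℤ, x % 2 = 1 → ∃ j, x^2 = 8*j + 1 := fun x hx =>
    ⟨x^2 / 8, by have := sq_mod_eight hx; omega⟩
  rcases Int.emod_two_eq_zero_or_one m with hm2 | hm2
  · obtain ⟨μ, rfl⟩ : ∃ μ, m = 2 * μ := ⟨m / 2, by omega⟩
    have hnodd : n % 2 = 1 := by
      by_contra hne
      have := hmn.isUnit_of_dvd' (x := 2) (by omega) (by omega)
      rw [Int.isUnit_iff] at this
      omega
    have hnμ : IsCoprime n μ := hmn.symm.of_mul_right_right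
    have hμ0 : μ ≠ 0 := by rintro rfl; simp at hm0
    obtain ⟨a, ha⟩ := sq8 n hnodd
    obtain ⟨F', hF'⟩ : ∃ F' : ℤ, F' = n^4 - 2*μ*n^3 + 8*μ^3*n - 8*μ^4 := ⟨_, rfl⟩
    obtain ⟨H', hH'⟩ : ∃ H' : ℤ, H' = (n^2 - 2*μ^2) * (n^2 - 4*μ^2) := ⟨_, rfl⟩
    have hFF : F = 2 * F' := by rw [hF, hF']; ring
    have hHH : H = 2 * H' := by rw [hH, hH']; ring
    have hn4 : n^4 = 64*a^2 + 16*a + 1 := by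
      rw [show n^4 = (n^2)^2 by ring, ha]; ring
    have hF'odd : F' % 2 = 1 := by
      have : F' = 2*(32*a^2 + 8*a - μ*n^3 + 4*μ^3*n - 4*μ^4) + 1 := by rw [hF', hn4]; ring
      omega
    obtain ⟨r, hr⟩ : IsSquare (n * (2*μ + n) * F') := by
      have := key (n * (2*μ + n) * F') 1 2 (by norm_num)
        (by convert hsq1 using 1; rw [hFF]; ring)
      simpa using this
    have hsqH : IsSquare (H' * F') := by
      have := key (H' * F') 1 2 (by norm_num)
        (by convert hsq2 using 1; rw [hFF, hHH]; ring)
      simpa using this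
    rw [hFF] at hcoF
    obtain ⟨e, he⟩ := isCoprime_split (c := r) hcoF.of_mul_right_right.symm
      (by rw [pow_two, ← hr]; ring)
    have he2 : e % 2 = 1 := by
      rcases Int.emod_two_eq_zero_or_one e with h | h
      · have := sq_mod_four h; omega
      · exact h
    have he8 := sq_mod_eight he2
    have he0 : e ≠ 0 := by rintro rfl; simp at he2
    have hn3 : n^3 = 8*(a*n) + n := by
      rw [show n^3 = n^2 * n by ring, ha]; ring
    rcases Int.emod_two_eq_zero_or_one μ with hμ | hμ
    · -- `F' ≡ 1` modulo `4` excludes the negative sign.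
      obtain ⟨ν, hν⟩ : ∃ ν, μ = 2 * ν := ⟨μ / 2, by omega⟩
      have hFmod : F' = 4*(16*a^2 + 4*a - ν*n^3 + 2*μ^3*n - 2*μ^4) + 1 := by
        rw [hF', hn4, hν]; ring
      rcases he with he | he
      · obtain ⟨s, hs⟩ := key H' 1 e he0 (by rwa [one_mul, ← he])
        have hco : IsCoprime (n^2 - 2*μ^2) (n^2 - 4*μ^2) := by
          rw [show n^2 - 4*μ^2 = 2*(-μ^2) + (n^2-2*μ^2)*1 by ring]
          refine IsCoprime.add_mul_left_right (IsCoprime.mul_right ?_ ?_) _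
          · exact isCoprime_two ((Int.odd_iff.2 hnodd).pow.sub_even ⟨μ^2, by ring⟩)
          · rw [show n^2 - 2*μ^2 = n^2 + (-μ^2)*2 by ring]
            exact hnμ.pow.neg_right.add_mul_left_left _
        have hpr : (n^2 - 2*μ^2) * (n^2 - 4*μ^2) = s^2 := by
          rw [← hH', pow_two, ← hs]; ring
        have hmod : n^2 - 2*μ^2 = 8*(a - ν^2) + 1 := by rw [ha, hν]; ring
        have hpos : 0 < n^2 - 2*μ^2 := by
          obtain ⟨x, hx | hx⟩ := isCoprime_split hco hpr
          · have := sq_nonneg x; omega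
          · rcases Int.emod_two_eq_zero_or_one x with h | h
            · have := sq_mod_four h; omega
            · have := sq_mod_eight h; omega
        obtain ⟨⟨x, hx⟩, y, hy⟩ := nonneg_split hco hpr hpos
        exact no_double_congruum n μ x y (Int.odd_iff.2 hnodd) hμ0 hnμ hx hy
      · omega
    · -- `F' ≡ 3` modulo `4` forces the negative sign, but `-H' ≡ 5` modulo `8` is no square.
      obtain ⟨b', hb'⟩ := sq8 μ hμ
      obtain ⟨i, hi⟩ : ∃ i, μ * n = 2 * i + 1 :=
        (Int.odd_iff.2 hμ).mul (Int.odd_iff.2 hnodd)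
      have hFmod : F' = 4*(16*a^2 + 4*a - 4*a*(μ*n) - i + 2*μ^3*n - 2*μ^4) - 1 := by
        rw [hF', hn4, hn3]; linear_combination -2*hi
      rcases he with he | he
      · omega
      · obtain ⟨s, hs⟩ := key H' (-1) e he0 (by rwa [neg_one_mul, ← he])
        have hHmod : H' = 8*((a-2*b')*(8*a-32*b'-3) - (a-4*b')) + 3 := by
          rw [hH', ha, hb']; ring
        rw [← pow_two] at hs
        rcases Int.emod_two_eq_zero_or_one s with h | h
        · have := sq_mod_four h; omega
        · have := sq_mod_eight h; omega
  · have hmodd : Odd m := Int.odd_iff.2 hm2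
    have hFo : Odd F := by
      rw [hF, show 2*n^4 - 2*m*n^3 + 2*m^3*n - m^4 = 2*(n^4 - m*n^3 + m^3*n) - m^4 by ring]
      exact (even_two_mul _).sub_odd hmodd.pow
    obtain ⟨q, hq⟩ := sq8 m hm2
    have hm4 : m^4 = 64*q^2 + 16*q + 1 := by
      rw [show m^4 = (m^2)^2 by ring, hq]; ring
    obtain ⟨r, hr⟩ := hsq1
    obtain ⟨e, he⟩ := isCoprime_split (c := r) ((isCoprime_two hFo).symm.mul_left hcoF).symm
      (by rw [pow_two, ← hr]; ring)
    have hFo' := Int.odd_iff.1 hFo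
    have he2 : e % 2 = 1 := by
      rcases Int.emod_two_eq_zero_or_one e with h | h
      · have := sq_mod_four h; omega
      · exact h
    have he8 := sq_mod_eight he2
    have he0 : e ≠ 0 := by rintro rfl; simp at he2
    rcases Int.emod_two_eq_zero_or_one n with hn2 | hn2
    · -- `F ≡ 3` modulo `4` forces the negative sign, but `-H ≡ 3` modulo `4` is no square.
      obtain ⟨j, hj⟩ : ∃ j, n = 2 * j := ⟨n / 2, by omega⟩
      have hFmod : F = 4*(8*j^4 - 4*m*j^3 + m^3*j - 16*q^2 - 4*q) - 1 := by
        rw [hF, hm4, hj]; ring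
      rcases he with he | he
      · omega
      · obtain ⟨s, hs⟩ := key H (-1) e he0 (by rwa [neg_one_mul, ← he])
        have hHmod : H = 4*(8*j^4 - 3*j^2*m^2 + 16*q^2 + 4*q) + 1 := by
          rw [hH, hj]; linear_combination hm4
        rw [← pow_two] at hs
        rcases Int.emod_two_eq_zero_or_one s with h | h
        · have := sq_mod_four h; omega
        · have := sq_mod_eight h; omega
    · -- `F ≡ 1` modulo `8` excludes the negative sign.
      obtain ⟨a, ha⟩ := sq8 n hn2
      have hFmod : F = 8*(16*a^2 + 4*a - 2*m*n*(a-q) - 8*q^2 - 2*q) + 1 := by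
        rw [hF, show 2*n^4 - 2*m*n^3 + 2*m^3*n - m^4
          = 2*(n^2)^2 - 2*m*n*(n^2 - m^2) - (m^2)^2 by ring, ha, hq]; ring
      rcases he with he | he
      · obtain ⟨s, hs⟩ := key H 1 e he0 (by rwa [one_mul, ← he])
        have hpr : (2*n^2 - m^2) * (n^2 - m^2) = s^2 := by
          rw [← hH, pow_two, ← hs]; ring
        have hpos : 0 < 2*n^2 - m^2 := by
          obtain ⟨x, hx | hx⟩ := isCoprime_split hmn2 hpr
          · have := sq_nonneg x; omega
          · rcases Int.emod_two_eq_zero_or_one x with h | h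
            · have := sq_mod_four h; omega
            · have := sq_mod_eight h; omega
        obtain ⟨⟨v, hv⟩, u, hu⟩ := nonneg_split hmn2 hpr hpos
        refine no_congruum _ n u v m rfl ?_ ?_ (by linarith) (by linarith)
        · rintro rfl; exact hnm (by rw [hu]; ring)
        · have : IsCoprime n (u^2) := by
            rw [← hu, show n^2 - m^2 = -m^2 + n * n by ring]
            exact hmn.symm.pow_right.neg_right.add_mul_left_right _
          exact (IsCoprime.pow_right_iff (by norm_num)).1 this
      · omega

theorem no_even_quadratic_factor_of_second_cuboid_polynomial :
    ∀ p q : ℕ, 0 < p → 0 < q → Nat.Coprime p q → p ≠ q →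
      ¬ ∃ c : ℚ, (X^2 - C c) ∣ cuboidPolynomial (p : ℚ) (q : ℚ) := by
  rintro p q hp hq - hpq ⟨c, hc⟩
  obtain ⟨k, b, d, hb, hd, h1, h2⟩ := exists_k p q c (by exact_mod_cast hp)
    (by exact_mod_cast hq) (by exact_mod_cast hpq) (eval_eq_zero p q c hc)
  exact no_k k b d hb hd h1 h2
end

section
/- Let p, q be positive integers and suppose t_0 ∈ ℚ satisfies Q_{p,q}(t_0) = 0. Then, with s = (p/q)^2, the rational number x_0 = (t_0/q^2)^2 is a root of P_s: P_s((t_0/q^2)^2) = 0. -/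
/-- The second cuboid quintic `P_s(x)`. -/
def cuboidQuintic (s x : ℚ) : ℚ :=
  x^5 + (2 + s) * (3 - 2*s) * x^4 + (1 + 10*s + 4*s^2 - 14*s^3 + s^4) * x^3
    - s * (1 - 14*s + 4*s^2 + 10*s^3 + s^4) * x^2
    - s^3 * (1 + 2*s) * (-2 + 3*s) * x - s^5

theorem quintic_root_of_cuboid_root (p q : ℕ) (hp : 0 < p) (hq : 0 < q)
    (t₀ : ℚ) (h : cuboidPoly (p : ℚ) (q : ℚ) t₀ = 0) :
    cuboidQuintic (((p : ℚ) / (q : ℚ))^2) ((t₀ / (q : ℚ)^2)^2) = 0 := by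
  have hq0 : (q : ℚ) ≠ 0 := by positivity
  -- `Q_{p,q}(t)` is homogeneous of degree 20 when `p`, `q` have weight 1 and `t` has weight 2, and
  -- only even powers of `p` and `t` occur, so dividing by `q ^ 20` leaves a polynomial in `s` and `x`.
  have key : cuboidQuintic (((p : ℚ) / (q : ℚ))^2) ((t₀ / (q : ℚ)^2)^2)
      = cuboidPoly (p : ℚ) (q : ℚ) t₀ / (q : ℚ)^20 := by
    unfold cuboidQuintic cuboidPoly
    field_simp
  rw [key, h, zero_div]
end

section
/- Let s, y be nonzero rational numbers with F(s,y) = 0, and set U = s + 1/s and V = y + 1/y. Then G(U,V) = 0, where G(U,V) = V^5 + (4U-2)·V^4 + (-10U^2-8U+64)·V^3 + (4U^3-108U^2+384)·V^2 + (U^4-8U^3-192U^2+768)·V + (-2U^4-128U^2+512). -/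
/-! The correspondence `(s, y) ↦ (U, V)` is invariant under `s ↦ 1/s`, and the norm of `F` along this
involution descends to the quotient: `F(s,y) · F(1/s,y) = y^5 · G(s + 1/s, y + 1/y)`.
Hence a zero of `F` with `y ≠ 0` gives a zero of `G`. -/

/-- The scaled root polynomial `F(s,y)`. -/
def scaledRootPoly (s y : ℚ) : ℚ :=
  s^2*y^5 + (-2*s^3 - s^2 + 6*s)*y^4 + (s^4 - 14*s^3 + 4*s^2 + 10*s + 1)*y^3
    + (-s^4 - 10*s^3 - 4*s^2 + 14*s - 1)*y^2 + (-6*s^3 + s^2 + 2*s)*y - s^2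

/-- The quotient polynomial `G(U,V)`. -/
def quotientPoly (U V : ℚ) : ℚ :=
  V^5 + (4*U - 2)*V^4 + (-10*U^2 - 8*U + 64)*V^3 + (4*U^3 - 108*U^2 + 384)*V^2
    + (U^4 - 8*U^3 - 192*U^2 + 768)*V + (-2*U^4 - 128*U^2 + 512)

theorem quotient_vanishes (s y : ℚ) (hs : s ≠ 0) (hy : y ≠ 0)
    (hF : scaledRootPoly s y = 0) (U V : ℚ)
    (hU : U = s + 1/s) (hV : V = y + 1/y) :
    quotientPoly U V = 0 := by
  have norm_eq : y^5 * quotientPoly U V = scaledRootPoly s y * scaledRootPoly (1/s) y := by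
    subst hU hV
    unfold quotientPoly scaledRootPoly
    field_simp
    ring
  rw [hF, zero_mul] at norm_eq
  exact (mul_eq_zero.mp norm_eq).resolve_left (pow_ne_zero 5 hy)
end

section
/- For every rational t with t·(t-1)^2·(t^2+6t+1) ≠ 0, setting U(t) = 2(t^5+6t^4+30t^3+16t^2+9t+2) / ( t(t-1)^2(t^2+6t+1) ) and V(t) = 2(t^4+36t^3+22t^2+4t+1) / ( (t-1)^2(t^2+6t+1) ), one has V(t) = t·(U(t)-2) - 2 and G(U(t), V(t)) = 0. -/
/-- Restriction of `G` to the line of slope `t` through `(2, -2)`: the factor `(U - 2) ^ 4`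
reflects the multiplicity of the singular point. -/
theorem quotientPoly_line (t U : ℚ) :
    quotientPoly U (t * (U - 2) - 2) =
      (U - 2)^4 * (t * (t - 1)^2 * (t^2 + 6*t + 1) * (U - 2)
        - 4 * (t^4 + 20*t^3 + 6*t^2 + 4*t + 1)) := by
  unfold quotientPoly
  ring

theorem quotient_parametrization (t : ℚ)
    (ht : t * (t - 1)^2 * (t^2 + 6*t + 1) ≠ 0)
    (U V : ℚ)
    (hU : U = 2*(t^5 + 6*t^4 + 30*t^3 + 16*t^2 + 9*t + 2)
            / (t * (t - 1)^2 * (t^2 + 6*t + 1)))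
    (hV : V = 2*(t^4 + 36*t^3 + 22*t^2 + 4*t + 1)
            / ((t - 1)^2 * (t^2 + 6*t + 1))) :
    V = t * (U - 2) - 2 ∧ quotientPoly U V = 0 := by
  have hQ : (t - 1)^2 * (t^2 + 6*t + 1) ≠ 0 := by
    intro h
    exact ht (by rw [mul_assoc, h, mul_zero])
  rw [eq_div_iff ht] at hU
  rw [eq_div_iff hQ] at hV
  have hline : V = t * (U - 2) - 2 := by
    apply mul_right_cancel₀ hQ
    linear_combination hV - hU
  refine ⟨hline, ?_⟩
  rw [hline, quotientPoly_line]
  linear_combination (U - 2)^4 * hU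
end
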